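/- (Abstract form of the paper's main Theorem.) Fix an admissible triple (l,m,k) with r = (l+m−k)/2, and set t_N := √(θ_{q(N)}(k,l,m)/([k+1]_{q(N)}·N^r)) for each integer N ≥ 2. Suppose that for each N ≥ 2 we are given complex inner product spaces H_N (nontrivial) and K_N, a linear isometry γ_N : H_N → K_N, and an orthogonal projection P_N on K_N such that ‖P_N(γ_N ξ)‖ = t_N·‖ξ‖ for all ξ ∈ H_N. Then t_N ∈ (0,1] for all large N, the maps α_N := t_N⁻¹·P_N∘γ_N are linear isometries, and the operator norms satisfy ‖α_N − γ_N‖ = O(N^{−1}) as N → ∞. -/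

import Mathlib

open scoped BigOperators
open Asymptotics Filter

/-- `q(N) = 2/(N + √(N²−4))`, so that `0 < q ≤ 1` and `q + q⁻¹ = N` for `N ≥ 2`. -/
noncomputable def qpar (N : ℕ) : ℝ := 2 / (N + Real.sqrt ((N : ℝ) ^ 2 - 4))

/-- The quantum integer `[n]_q = q^{n−1} + q^{n−3} + ⋯ + q^{−(n−1)}` (and `[0]_q = 0`). -/
noncomputable def qint (N n : ℕ) : ℝ :=
  ∑ j ∈ Finset.range n, qpar N ^ ((n : ℤ) - 1 - 2 * (j : ℤ))

/-- The quantum factorial `[n]_q! = [n]_q·[n−1]_q·⋯·[1]_q`, with `[0]_q! = 1`. -/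
noncomputable def qfact (N n : ℕ) : ℝ := ∏ i ∈ Finset.range n, qint N (i + 1)

/-- The theta-net `θ_q(k,l,m)` of an admissible triple, with `r = (l+m−k)/2`. -/
noncomputable def thetaNet (N k l m r : ℕ) : ℝ :=
  (qfact N r * qfact N (l - r) * qfact N (m - r) * qfact N (k + r + 1)) /
    (qfact N l * qfact N m * qfact N k)

/-!
All quantum integers are powers of `q⁻¹` times polynomials in `q²` with constant term `1`:
`[n + 1]_q = q⁻ⁿ (1 + q² + ⋯ + q²ⁿ)` and `N = q⁻¹ (1 + q²)`. In `θ_q(k,l,m) / ([k+1]_q N^r)` the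
powers of `q⁻¹` cancel exactly, leaving a rational function of `q²` that takes the value `1` at `0`
and is regular there. Hence `t_N = 1 + O(q²) = 1 + O(N⁻²)`. On the other hand, for an orthogonal
projection `P` with `‖P v‖ = t ‖v‖` one has `⟪P v, v⟫ = ‖P v‖² = t² ‖v‖²`, so that
`‖t⁻¹ P v - v‖² = 2 (1 - t) ‖v‖²` and `‖α_N - γ_N‖² = 2 (1 - t_N) = O(N⁻²)`.
-/

open Finset Topology

section GaussFactorial

/-- The `q`-factorial in its polynomial normalisation `∏_{i=1}^n (1 + x + ⋯ + x^{i-1})`. It differs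
from the symmetric `[n]_q!` by a power of `q`, with `x = q²`; see `qfact_eq`. -/
def gaussFactorial {R : Type*} [CommSemiring R] (n : ℕ) (x : R) : R :=
  ∏ i ∈ range n, ∑ j ∈ range (i + 1), x ^ j

lemma gaussFactorial_zero_right {R : Type*} [CommSemiring R] (n : ℕ) :
    gaussFactorial n (0 : R) = 1 :=
  prod_eq_one fun i _ => by simp [sum_range_succ']

lemma gaussFactorial_pos {R : Type*} [CommSemiring R] [PartialOrder R] [IsStrictOrderedRing R]
    (n : ℕ) {x : R} (hx : 0 ≤ x) : 0 < gaussFactorial n x :=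
  prod_pos fun i _ => geom_sum_pos hx i.succ_ne_zero

lemma differentiable_gaussFactorial {𝕜 : Type*} [NontriviallyNormedField 𝕜] (n : ℕ) :
    Differentiable 𝕜 (gaussFactorial n : 𝕜 → 𝕜) := by
  unfold gaussFactorial
  fun_prop

end GaussFactorial

section ThetaRatio

/-- The rational function of `x = q²` equal to `θ_q(k,l,m) / ([k+1]_q N^r)` for the admissible
triple `(k,l,m) = (a + b, a + r, b + r)`; see `thetaNet_div_eq_thetaRatio`. -/
noncomputable def thetaRatio (a b r : ℕ) (x : ℝ) : ℝ :=
  gaussFactorial r x * gaussFactorial a x * gaussFactorial b x * gaussFactorial (a + b + r + 1) x /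
    (gaussFactorial (a + r) x * gaussFactorial (b + r) x * gaussFactorial (a + b + 1) x *
      (1 + x) ^ r)

variable (a b r : ℕ)

lemma thetaRatio_zero_right : thetaRatio a b r 0 = 1 := by
  simp [thetaRatio, gaussFactorial_zero_right]

lemma thetaRatio_pos {x : ℝ} (hx : 0 ≤ x) : 0 < thetaRatio a b r x := by
  have hpos := fun n => gaussFactorial_pos n hx
  exact div_pos (mul_pos (mul_pos (mul_pos (hpos _) (hpos _)) (hpos _)) (hpos _))
    (mul_pos (mul_pos (mul_pos (hpos _) (hpos _)) (hpos _)) (by positivity))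

lemma differentiableAt_thetaRatio_zero : DifferentiableAt ℝ (thetaRatio a b r) 0 := by
  have hdiff := fun n => (differentiable_gaussFactorial (𝕜 := ℝ) n).differentiableAt (x := 0)
  unfold thetaRatio
  refine .fun_div (by fun_prop) (by fun_prop) ?_
  simp [gaussFactorial_zero_right]

lemma isBigO_sqrt_thetaRatio_sub_one :
    (fun x => √(thetaRatio a b r x) - 1) =O[𝓝 0] fun x => x := by
  have hsqrt : DifferentiableAt ℝ (fun x => √(thetaRatio a b r x)) 0 :=
    (differentiableAt_thetaRatio_zero a b r).sqrt (by simp [thetaRatio_zero_right])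
  simpa [thetaRatio_zero_right] using hsqrt.isBigO_sub

end ThetaRatio

section QuantumIntegers

variable {N : ℕ}

lemma qpar_pos (hN : 0 < N) : 0 < qpar N := by
  unfold qpar
  positivity

lemma qpar_le_two_div (hN : 0 < N) : qpar N ≤ 2 / N :=
  div_le_div_of_nonneg_left zero_le_two (by positivity)
    (le_add_of_nonneg_right (Real.sqrt_nonneg _))

lemma natCast_eq_inv_qpar_mul (hN : 2 ≤ N) : (N : ℝ) = (qpar N)⁻¹ * (1 + qpar N ^ 2) := by
  have hN' : (2 : ℝ) ≤ N := by exact_mod_cast hN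
  have hsq : √((N : ℝ) ^ 2 - 4) ^ 2 = (N : ℝ) ^ 2 - 4 := Real.sq_sqrt (by nlinarith)
  unfold qpar
  field_simp
  linear_combination -hsq

lemma qint_succ (hN : 0 < N) (n : ℕ) :
    qint N (n + 1) = (qpar N)⁻¹ ^ n * ∑ j ∈ range (n + 1), (qpar N ^ 2) ^ j := by
  have hq : qpar N ≠ 0 := (qpar_pos hN).ne'
  rw [qint, ← sum_range_reflect, mul_sum]
  refine sum_congr rfl fun j hj => ?_
  have hexp : ((n + 1 : ℕ) : ℤ) - 1 - 2 * ((n + 1 - 1 - j : ℕ) : ℤ) = -n + (2 * j : ℕ) := by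
    have := mem_range.1 hj
    omega
  rw [hexp, zpow_add₀ hq, zpow_neg, zpow_natCast, zpow_natCast, inv_pow, pow_mul]

lemma qfact_succ (N n : ℕ) : qfact N (n + 1) = qfact N n * qint N (n + 1) :=
  prod_range_succ _ n

lemma qfact_eq (hN : 0 < N) (n : ℕ) :
    qfact N n = (qpar N)⁻¹ ^ n.choose 2 * gaussFactorial n (qpar N ^ 2) := by
  rw [Nat.choose_two_right, ← sum_range_id, ← prod_pow_eq_pow_sum, gaussFactorial,
    ← prod_mul_distrib]
  exact prod_congr rfl fun i _ => qint_succ hN i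

/- The powers of `q⁻¹` carried by the numerator and by the denominator of
`θ_q(k,l,m) / ([k+1]_q N^r)` are equal. -/
lemma choose_two_exponent_balance (a b r : ℕ) :
    r.choose 2 + a.choose 2 + b.choose 2 + (a + b + r + 1).choose 2 =
      (a + r).choose 2 + (b + r).choose 2 + (a + b + 1).choose 2 + r := by
  rw [← Nat.cast_inj (R := ℚ)]
  push_cast [Nat.cast_choose_two]
  ring

lemma thetaNet_div_eq_thetaRatio (hN : 2 ≤ N) (a b r : ℕ) :
    thetaNet N (a + b) (a + r) (b + r) r / (qint N (a + b + 1) * (N : ℝ) ^ r) =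
      thetaRatio a b r (qpar N ^ 2) := by
  have hN0 : 0 < N := by omega
  have hNr : (N : ℝ) ^ r = (qpar N)⁻¹ ^ r * (1 + qpar N ^ 2) ^ r := by
    rw [← mul_pow, ← natCast_eq_inv_qpar_mul hN]
  calc
    _ = qfact N r * qfact N a * qfact N b * qfact N (a + b + r + 1) /
          (qfact N (a + r) * qfact N (b + r) * qfact N (a + b + 1) * (N : ℝ) ^ r) := by
      rw [thetaNet, Nat.add_sub_cancel, Nat.add_sub_cancel, div_div, qfact_succ N (a + b)]
      ring
    _ = thetaRatio a b r (qpar N ^ 2) := by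
      have hpow := pow_ne_zero ((a + r).choose 2 + (b + r).choose 2 + (a + b + 1).choose 2 + r)
        (inv_ne_zero (qpar_pos hN0).ne')
      refine Eq.trans ?_ (mul_div_mul_left _ _ hpow)
      congr 1
      · rw [← choose_two_exponent_balance]
        simp only [qfact_eq hN0, pow_add]
        ring
      · simp only [qfact_eq hN0, hNr, pow_add]
        ring

lemma isBigO_qpar_sq :
    (fun N : ℕ => qpar N ^ 2) =O[atTop] fun N : ℕ => ((N : ℝ)⁻¹) ^ 2 := by
  refine IsBigO.pow (.of_bound 2 ?_) 2
  filter_upwards [eventually_gt_atTop 0] with N hN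
  rw [Real.norm_of_nonneg (qpar_pos hN).le, Real.norm_of_nonneg (by positivity), ← div_eq_mul_inv]
  exact qpar_le_two_div hN

lemma isBigO_sqrt_thetaRatio_qpar_sq_sub_one (a b r : ℕ) :
    (fun N : ℕ => √(thetaRatio a b r (qpar N ^ 2)) - 1) =O[atTop] fun N : ℕ => ((N : ℝ)⁻¹) ^ 2 := by
  have hinv : Tendsto (fun N : ℕ => ((N : ℝ)⁻¹) ^ 2) atTop (𝓝 0) := by
    simpa using (tendsto_inv_atTop_nhds_zero_nat (𝕜 := ℝ)).pow 2
  exact ((isBigO_sqrt_thetaRatio_sub_one a b r).comp_tendsto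
    (isBigO_qpar_sq.trans_tendsto hinv)).trans isBigO_qpar_sq

end QuantumIntegers

section Projection

variable {𝕜 E F : Type*} [RCLike 𝕜] [NormedAddCommGroup E] [InnerProductSpace 𝕜 E]
  [NormedAddCommGroup F] [InnerProductSpace 𝕜 F]

lemma norm_inv_smul_starProjection_sub_sq [NormedSpace ℝ F] [IsScalarTower ℝ 𝕜 F]
    (U : Submodule 𝕜 F) [U.HasOrthogonalProjection] {c : ℝ} (hc : c ≠ 0) {v : F}
    (hv : ‖U.starProjection v‖ = c * ‖v‖) :
    ‖c⁻¹ • U.starProjection v - v‖ ^ 2 = 2 * (1 - c) * ‖v‖ ^ 2 := by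
  have hinner : RCLike.re (inner 𝕜 (c⁻¹ • U.starProjection v) v) = c * ‖v‖ ^ 2 := by
    rw [RCLike.real_smul_eq_coe_smul (K := 𝕜), inner_smul_left, RCLike.conj_ofReal,
      RCLike.re_ofReal_mul, U.re_inner_starProjection_eq_normSq, Submodule.coe_norm,
      ← U.starProjection_apply, hv]
    field_simp
  have hnorm : ‖c⁻¹ • U.starProjection v‖ ^ 2 = ‖v‖ ^ 2 := by
    rw [norm_smul, hv, mul_pow, mul_pow, norm_inv, inv_pow, Real.norm_eq_abs, sq_abs]
    field_simp
  rw [norm_sub_sq (𝕜 := 𝕜), hinner, hnorm]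
  ring

variable [Nontrivial E] {γ : E →ₗᵢ[𝕜] F} {P : F →L[𝕜] F} {c : ℝ}

lemma le_one_of_norm_isSymmetricProjection_apply (hP : (P : F →ₗ[𝕜] F).IsSymmetricProjection)
    (hnorm : ∀ v, ‖P (γ v)‖ = c * ‖v‖) : c ≤ 1 := by
  obtain ⟨U, _, hU⟩ := LinearMap.isSymmetricProjection_iff_eq_coe_starProjection.1 hP
  obtain rfl : P = U.starProjection := ContinuousLinearMap.coe_injective hU
  obtain ⟨v, hv⟩ := exists_ne (0 : E)
  have hle := U.norm_starProjection_apply_le (γ v)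
  rw [hnorm, γ.norm_map] at hle
  exact le_of_mul_le_mul_right (by simpa using hle) (norm_pos_iff.2 hv)

lemma norm_inv_smul_comp_sub_linearIsometry_sq [NormedSpace ℝ F] [IsScalarTower ℝ 𝕜 F]
    (hP : (P : F →ₗ[𝕜] F).IsSymmetricProjection) (hc : c ≠ 0)
    (hnorm : ∀ v, ‖P (γ v)‖ = c * ‖v‖) :
    ‖c⁻¹ • P.comp γ.toContinuousLinearMap - γ.toContinuousLinearMap‖ ^ 2 = 2 * (1 - c) := by
  have hc1 := le_one_of_norm_isSymmetricProjection_apply hP hnorm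
  obtain ⟨U, _, hU⟩ := LinearMap.isSymmetricProjection_iff_eq_coe_starProjection.1 hP
  obtain rfl : P = U.starProjection := ContinuousLinearMap.coe_injective hU
  have hnonneg : 0 ≤ 2 * (1 - c) := by linarith
  rw [ContinuousLinearMap.homothety_norm (a := √(2 * (1 - c))), Real.sq_sqrt hnonneg]
  intro v
  have hsq := norm_inv_smul_starProjection_sub_sq U hc (v := γ v) (by rw [hnorm, γ.norm_map])
  rw [γ.norm_map] at hsq
  rw [← Real.sqrt_sq (norm_nonneg v), ← Real.sqrt_mul hnonneg, ← hsq,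
    Real.sqrt_sq (norm_nonneg _)]
  rfl

end Projection

theorem main_theorem_abstract_general {𝕜 : Type*} [RCLike 𝕜] (k l m r : ℕ)
    (hadm : l + m = k + 2 * r) (hrl : r ≤ l) (hrm : r ≤ m)
    (t : ℕ → ℝ)
    (ht : ∀ N : ℕ, t N = √(thetaNet N k l m r / (qint N (k + 1) * (N : ℝ) ^ r)))
    (H K : ℕ → Type*)
    [∀ N, NormedAddCommGroup (H N)] [∀ N, InnerProductSpace 𝕜 (H N)] [∀ N, Nontrivial (H N)]
    [∀ N, NormedAddCommGroup (K N)] [∀ N, InnerProductSpace 𝕜 (K N)]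
    [∀ N, NormedSpace ℝ (K N)] [∀ N, IsScalarTower ℝ 𝕜 (K N)]
    (γ : ∀ N, H N →ₗᵢ[𝕜] K N) (P : ∀ N, K N →L[𝕜] K N)
    (hP : ∀ N, 2 ≤ N → (P N : K N →ₗ[𝕜] K N).IsSymmetricProjection)
    (hnorm : ∀ N, 2 ≤ N → ∀ ξ : H N, ‖P N (γ N ξ)‖ = t N * ‖ξ‖) :
    (∀ N, 2 ≤ N → (0 < t N ∧ t N ≤ 1) ∧
      ∀ ξ : H N, ‖((t N)⁻¹ • (P N).comp (γ N).toContinuousLinearMap) ξ‖ = ‖ξ‖) ∧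
    (fun N : ℕ =>
        ‖(t N)⁻¹ • (P N).comp (γ N).toContinuousLinearMap - (γ N).toContinuousLinearMap‖)
      =O[atTop] fun N : ℕ => (N : ℝ)⁻¹ := by
  obtain ⟨a, rfl⟩ := Nat.exists_eq_add_of_le' hrl
  obtain ⟨b, rfl⟩ := Nat.exists_eq_add_of_le' hrm
  obtain rfl : k = a + b := by omega
  have t_eq : ∀ N, 2 ≤ N → t N = √(thetaRatio a b r (qpar N ^ 2)) := fun N hN => by
    rw [ht, thetaNet_div_eq_thetaRatio hN]
  have t_pos : ∀ N, 2 ≤ N → 0 < t N := fun N hN => by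
    rw [t_eq N hN]
    exact Real.sqrt_pos.2 (thetaRatio_pos a b r (sq_nonneg _))
  refine ⟨fun N hN => ⟨⟨t_pos N hN, le_one_of_norm_isSymmetricProjection_apply (hP N hN)
    (hnorm N hN)⟩, fun ξ => ?_⟩, IsBigO.of_pow two_ne_zero ?_⟩
  · change ‖(t N)⁻¹ • P N (γ N ξ)‖ = ‖ξ‖
    rw [norm_smul, hnorm N hN, norm_inv, Real.norm_of_nonneg (t_pos N hN).le,
      inv_mul_cancel_left₀ (t_pos N hN).ne']
  · refine ((isBigO_sqrt_thetaRatio_qpar_sq_sub_one a b r).const_mul_left (-2)).congr' ?_ .rfl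
    filter_upwards [eventually_ge_atTop 2] with N hN
    rw [Pi.pow_apply, norm_inv_smul_comp_sub_linearIsometry_sq (hP N hN) (t_pos N hN).ne'
      (hnorm N hN), t_eq N hN]
    ring

/-- Abstract form of the paper's main theorem.  Fix an admissible triple `(l,m,k)` with
`r = (l+m−k)/2` and set `t_N = √(θ_{q(N)}(k,l,m)/([k+1]_{q(N)}·N^r))`.  Given, for each `N ≥ 2`,
a nontrivial complex inner product space `H N`, a complex inner product space `K N`, a linear
isometry `γ N : H N → K N` and an orthogonal projection `P N` on `K N` with
`‖P N (γ N ξ)‖ = t N · ‖ξ‖` for all `ξ`, the maps `α N := (t N)⁻¹ • (P N ∘ γ N)` are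
linear isometries for all large `N` (with `t N ∈ (0,1]`), and `‖α N − γ N‖ = O(N⁻¹)`. -/
theorem main_theorem_abstract (k l m r : ℕ)
    (hadm : l + m = k + 2 * r) (hrl : r ≤ l) (hrm : r ≤ m)
    (t : ℕ → ℝ)
    (ht : ∀ N : ℕ, t N = Real.sqrt (thetaNet N k l m r / (qint N (k + 1) * (N : ℝ) ^ r)))
    (H K : ℕ → Type*)
    [∀ N, NormedAddCommGroup (H N)] [∀ N, InnerProductSpace ℂ (H N)] [∀ N, Nontrivial (H N)]
    [∀ N, NormedAddCommGroup (K N)] [∀ N, InnerProductSpace ℂ (K N)]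
    (γ : ∀ N, H N →ₗᵢ[ℂ] K N) (P : ∀ N, K N →L[ℂ] K N)
    (hP2 : ∀ N, 2 ≤ N → (P N).comp (P N) = P N)
    (hPsa : ∀ N, 2 ≤ N → ∀ x y : K N, (inner ℂ ((P N) x) y : ℂ) = inner ℂ x ((P N) y))
    (hnorm : ∀ N, 2 ≤ N → ∀ ξ : H N, ‖(P N) ((γ N) ξ)‖ = t N * ‖ξ‖) :
    (∀ᶠ N in atTop, (0 < t N ∧ t N ≤ 1) ∧
      ∀ ξ : H N, ‖((t N)⁻¹ • ((P N).comp (γ N).toContinuousLinearMap)) ξ‖ = ‖ξ‖) ∧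
    (fun N : ℕ =>
        ‖(t N)⁻¹ • ((P N).comp (γ N).toContinuousLinearMap) - (γ N).toContinuousLinearMap‖)
      =O[atTop] fun N : ℕ => (N : ℝ)⁻¹ := by
  exact (main_theorem_abstract_general k l m r hadm hrl hrm t ht H K γ P
    (fun N hN => ⟨ContinuousLinearMap.IsIdempotentElem.toLinearMap (hP2 N hN), hPsa N hN⟩)
    hnorm).imp_left (eventually_ge_atTop 2).mono
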